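/- arXiv:1807.02831 — 4 statements merged into one kernel-verified Lean document; each statement's English description precedes it below -/
import Mathlib

section
/- Let X be a real reflexive Banach space and let V : X → X* be an everywhere defined nonlinear operator that is bounded (it maps bounded subsets of X to bounded subsets of X*), pseudomonotone, and strongly coercive, i.e. ⟨V(u), u⟩ / ‖u‖ → +∞ as ‖u‖ → ∞. Then V is surjective: for every u* ∈ X* there exists u ∈ X with V(u) = u*. -/
open Filter Topology

variable {X : Type*} [NormedAddCommGroup X] [NormedSpace ℝ X]

/-- Weak convergence of a sequence in `X`: `f (u n) → f x` for every continuous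
linear functional `f ∈ X*`. -/
def WeakConvergent (u : ℕ → X) (x : X) : Prop :=
  ∀ f : X →L[ℝ] ℝ, Tendsto (fun n => f (u n)) atTop (𝓝 (f x))

/-- Weak convergence of a sequence in the dual `X*` (for `X` reflexive this is
equivalently weak-* convergence, i.e. pointwise convergence on `X`). -/
def WeakConvergentDual (F : ℕ → X →L[ℝ] ℝ) (g : X →L[ℝ] ℝ) : Prop :=
  ∀ x : X, Tendsto (fun n => F n x) atTop (𝓝 (g x))

/-- An operator `V : X → X*` is pseudomonotone if whenever `u n ⇀ u` weakly in `X`,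
`V (u n) ⇀ u*` weakly in `X*` and `limsup ⟨V (u n), u n - u⟩ ≤ 0`, then `u* = V u`
and `⟨V (u n), u n⟩ → ⟨V u, u⟩`. -/
def Pseudomonotone (V : X → X →L[ℝ] ℝ) : Prop :=
  ∀ (u : ℕ → X) (x : X) (g : X →L[ℝ] ℝ),
    WeakConvergent u x →
    WeakConvergentDual (fun n => V (u n)) g →
    Filter.limsup (fun n => V (u n) (u n - x)) atTop ≤ (0 : ℝ) →
    g = V x ∧ Tendsto (fun n => V (u n) (u n)) atTop (𝓝 (V x x))

/-- An operator is bounded if it maps bounded sets to bounded sets. -/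
def BoundedOperator (V : X → X →L[ℝ] ℝ) : Prop :=
  ∀ s : Set X, Bornology.IsBounded s → Bornology.IsBounded (V '' s)

/-- An operator `V : X → X*` is strongly coercive if `⟨V u, u⟩ / ‖u‖ → +∞` as `‖u‖ → ∞`. -/
def StronglyCoercive (V : X → X →L[ℝ] ℝ) : Prop :=
  Tendsto (fun u : X => V u u / ‖u‖) (Filter.comap norm atTop) atTop

open MeasureTheory
open scoped NNReal

/-!
**Finite dimensions.** If `g` is Lipschitz and vanishes off a bounded set `s`, then
`t ↦ ∫ₛ det (1 + t Dg)` is a polynomial. For small `t` the map `1 + t g` is a bijection of `s`, so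
the polynomial is the constant `vol s`. At `t = 1` this forbids Lipschitz retractions of a ball onto
its sphere, since their Jacobian vanishes, and hence a continuous field pointing outwards near
infinity has a zero.

**Galerkin.** Given `f`, coercivity yields for each finite-dimensional subspace `S` a solution of
`V u = f` tested against `S`, bounded independently of `S`. Along an ultrafilter on the directed
family of subspaces these solutions converge weakly to some `x`, and `⟨V u, u - x⟩ → 0`.

**Nets to sequences.** Pseudomonotonicity speaks of sequences only. Weak topologies are countably
tight, and on a separable closed subspace of a reflexive space countably many functionals detect
weak convergence of bounded families. Applied in `X × X*`, this extracts from the ultrafilter a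
sequence along which both `u` and `V u` have the same weak limits, whence `V x = f`.
-/

section Determinant

variable {E : Type*} [NormedAddCommGroup E] [NormedSpace ℝ E] [FiniteDimensional ℝ E]

theorem exists_polynomial_eval_eq_det_id_add_smul (B : E →L[ℝ] E) :
    ∃ P : Polynomial ℝ, P.natDegree ≤ Module.finrank ℝ E ∧
      ∀ t : ℝ, P.eval t = (ContinuousLinearMap.id ℝ E + t • B).det := by
  let b := Module.finBasis ℝ E
  let M := LinearMap.toMatrix b b (B : E →ₗ[ℝ] E)
  refine ⟨((Polynomial.X : Polynomial ℝ) • M.map Polynomial.C +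
    (1 : Matrix _ _ ℝ).map Polynomial.C).det,
    by simpa using Polynomial.natDegree_det_X_add_C_le M 1, fun t => ?_⟩
  have hM : LinearMap.toMatrix b b (ContinuousLinearMap.id ℝ E + t • B : E →L[ℝ] E) =
      t • M + 1 := by
    simp [M, add_comm]
  rw [ContinuousLinearMap.det, ← LinearMap.det_toMatrix b, hM, ← Polynomial.coe_evalRingHom,
    RingHom.map_det]
  congr 1
  ext i j
  simp [mul_comm (M i j), Matrix.one_apply, apply_ite (Polynomial.eval t)]

theorem det_id_add_ne_zero_of_norm_lt_one {A : E →L[ℝ] E} (hA : ‖A‖ < 1) :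
    (ContinuousLinearMap.id ℝ E + A).det ≠ 0 := by
  have : CompleteSpace E := FiniteDimensional.complete ℝ E
  have hunit : IsUnit (ContinuousLinearMap.id ℝ E + A) := by
    simpa [ContinuousLinearMap.one_def] using
      isUnit_one_sub_of_norm_lt_one (x := -A) (by rwa [norm_neg])
  have := hunit.map (ContinuousLinearMap.toLinearMapRingHom (R₁ := ℝ) (M₁ := E))
  exact (LinearMap.isUnit_iff_isUnit_det _ |>.1 this).ne_zero

theorem det_id_add_pos_of_norm_lt_one {A : E →L[ℝ] E} (hA : ‖A‖ < 1) :
    0 < (ContinuousLinearMap.id ℝ E + A).det := by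
  let d : ℝ → ℝ := fun s => (ContinuousLinearMap.id ℝ E + s • A).det
  have hd : ContinuousOn d (Set.Icc 0 1) :=
    (ContinuousLinearMap.continuous_det.comp (by fun_prop)).continuousOn
  have hd_zero : d 0 = 1 := by simp [d, ContinuousLinearMap.det]
  have hd_ne : ∀ s ∈ Set.Icc (0 : ℝ) 1, d s ≠ 0 := fun s hs =>
    det_id_add_ne_zero_of_norm_lt_one <| by
      rw [norm_smul, Real.norm_of_nonneg hs.1]
      exact (mul_le_of_le_one_left (norm_nonneg A) hs.2).trans_lt hA
  by_contra! hneg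
  obtain ⟨s, hs, hds⟩ : (0 : ℝ) ∈ d '' Set.Icc 0 1 :=
    intermediate_value_Icc' zero_le_one hd ⟨by simpa [d] using hneg, by simp [hd_zero]⟩
  exact hd_ne s hs hds

end Determinant

theorem exists_polynomial_eval_eq_integral {α : Type*} [MeasurableSpace α] {μ : Measure α}
    {F : ℝ → α → ℝ} {n : ℕ} (hF : ∀ t, Integrable (F t) μ)
    (hpoly : ∀ x, ∃ P : Polynomial ℝ, P.natDegree ≤ n ∧ ∀ t, P.eval t = F t x) :
    ∃ Q : Polynomial ℝ, ∀ t, Q.eval t = ∫ x, F t x ∂μ := by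
  let nodes := Finset.range (n + 1)
  let v : ℕ → ℝ := Nat.cast
  have hv : Set.InjOn v nodes := Nat.cast_injective.injOn
  have hF_eq : ∀ t x, F t x = ∑ i ∈ nodes, F (v i) x * (Lagrange.basis nodes v i).eval t := by
    intro t x
    obtain ⟨P, hdeg, hP⟩ := hpoly x
    have hP_eq := Lagrange.eq_interpolate (f := P) hv <|
      Polynomial.degree_le_natDegree.trans_lt <| by
        simpa [nodes] using Nat.cast_lt.2 (Nat.lt_succ_of_le hdeg)
    rw [← hP, hP_eq, Lagrange.interpolate_apply]
    simp [Polynomial.eval_finsetSum, hP]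
  refine ⟨Lagrange.interpolate nodes v fun i => ∫ x, F (v i) x ∂μ, fun t => ?_⟩
  simp_rw [hF_eq t]
  rw [integral_finsetSum _ fun i _ => (hF _).mul_const _]
  simp [Lagrange.interpolate_apply, Polynomial.eval_finsetSum, integral_mul_const]

theorem bijective_id_add_of_lipschitzWith {E : Type*} [NormedAddCommGroup E] [CompleteSpace E]
    {g : E → E} {K : ℝ≥0} (hg : LipschitzWith K g) (hK : K < 1) :
    Function.Bijective fun x => x + g x := by
  refine ⟨(AntilipschitzWith.id.add_lipschitzWith hg (by simpa using hK)).injective, fun y => ?_⟩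
  have hcontract : ContractingWith K fun x => y - g x :=
    ⟨hK, by simpa using (LipschitzWith.const y).sub hg⟩
  exact ⟨hcontract.fixedPoint, (sub_eq_iff_eq_add.1 hcontract.fixedPoint_isFixedPt).symm⟩

theorem image_eq_of_bijective_of_eqOn_compl {α : Type*} {f : α → α} {s : Set α}
    (hf : Function.Bijective f) (hs : Set.EqOn f id sᶜ) : f '' s = s := by
  rw [← compl_inj_iff, ← Set.image_compl_eq hf, hs.image_eq, Set.image_id]

section ChangeOfVariables

variable {E : Type*} [NormedAddCommGroup E] [NormedSpace ℝ E] [FiniteDimensional ℝ E]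
  [MeasurableSpace E] [BorelSpace E] {μ : Measure E} {g : E → E} {K : ℝ≥0} {s : Set E}

theorem setIntegral_det_id_add_fderiv_of_lt_one [μ.IsAddHaarMeasure] (hs : MeasurableSet s)
    (hg : LipschitzWith K g) (hK : K < 1) (hdiff : ∀ x ∈ s, DifferentiableAt ℝ g x)
    (hsupp : ∀ x ∉ s, g x = 0) :
    ∫ x in s, (ContinuousLinearMap.id ℝ E + fderiv ℝ g x).det ∂μ = μ.real s := by
  have : CompleteSpace E := FiniteDimensional.complete ℝ E
  have hbij := bijective_id_add_of_lipschitzWith hg hK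
  have himage : (fun x => x + g x) '' s = s :=
    image_eq_of_bijective_of_eqOn_compl hbij fun x hx => by simp [hsupp x hx]
  have hdet_pos : ∀ x, 0 < (ContinuousLinearMap.id ℝ E + fderiv ℝ g x).det := fun x =>
    det_id_add_pos_of_norm_lt_one ((norm_fderiv_le_of_lipschitz ℝ hg).trans_lt hK)
  have hcov := integral_image_eq_integral_abs_det_fderiv_smul μ hs
    (fun x hx => ((hasFDerivAt_id x).add (hdiff x hx).hasFDerivAt).hasFDerivWithinAt)
    hbij.injective.injOn fun _ => (1 : ℝ)
  change ∫ _ in (fun x => x + g x) '' s, (1 : ℝ) ∂μ = _ at hcov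
  simpa [himage, abs_of_pos (hdet_pos _)] using hcov.symm

theorem integrableOn_det_id_add_smul_fderiv (hs : μ s ≠ ⊤) (hg : LipschitzWith K g) (t : ℝ) :
    IntegrableOn (fun x => (ContinuousLinearMap.id ℝ E + t • fderiv ℝ g x).det) s μ := by
  let d : (E →L[ℝ] E) → ℝ := fun A => (ContinuousLinearMap.id ℝ E + t • A).det
  have hd : Continuous d := ContinuousLinearMap.continuous_det.comp (by fun_prop)
  have := FiniteDimensional.proper ℝ (E →L[ℝ] E)
  obtain ⟨C, hC⟩ := (isCompact_closedBall (0 : E →L[ℝ] E) K).exists_bound_of_continuousOn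
    hd.continuousOn
  refine Measure.integrableOn_of_bounded hs
    (hd.measurable.comp (measurable_fderiv ℝ g)).aestronglyMeasurable ?_ (M := C)
  exact Eventually.of_forall fun x => hC _ <| by
    simpa using norm_fderiv_le_of_lipschitz ℝ hg

theorem setIntegral_det_id_add_fderiv [μ.IsAddHaarMeasure] (hs : MeasurableSet s) (hμs : μ s ≠ ⊤)
    (hg : LipschitzWith K g) (hdiff : ∀ x ∈ s, DifferentiableAt ℝ g x)
    (hsupp : ∀ x ∉ s, g x = 0) :
    ∫ x in s, (ContinuousLinearMap.id ℝ E + fderiv ℝ g x).det ∂μ = μ.real s := by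
  obtain ⟨Q, hQ⟩ := exists_polynomial_eval_eq_integral
    (integrableOn_det_id_add_smul_fderiv hμs hg)
    fun x => exists_polynomial_eval_eq_det_id_add_smul (fderiv ℝ g x)
  have hQ_small : ∀ t ∈ Set.Ioo (0 : ℝ) (K + 1)⁻¹, Q.eval t = μ.real s := by
    rintro t ⟨ht, htK⟩
    have hlip : LipschitzWith (‖t‖₊ * K) (t • g) := (lipschitzWith_smul t).comp hg
    have hlt : ‖t‖₊ * K < 1 := by
      rw [← NNReal.coe_lt_coe]
      push_cast
      rw [Real.norm_of_nonneg ht.le]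
      calc t * K ≤ t * (K + 1) := by gcongr; simp
        _ < 1 := by rwa [← lt_div_iff₀ (by positivity), one_div]
    rw [hQ, ← setIntegral_det_id_add_fderiv_of_lt_one hs hlip hlt
      (fun x hx => (hdiff x hx).const_smul t) fun x hx => by simp [hsupp x hx]]
    simp_rw [fderiv_const_smul_field]
    rfl
  have hQ_const : Q = Polynomial.C (μ.real s) :=
    Polynomial.eq_of_infinite_eval_eq _ _ <|
      (Set.Ioo_infinite (by positivity : (0 : ℝ) < (K + 1)⁻¹)).mono fun t ht => by
        simpa using hQ_small t ht
  simpa [hQ_const] using (hQ 1).symm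

end ChangeOfVariables

section Brouwer

variable {E : Type*} [NormedAddCommGroup E]

theorem exists_pos_le_norm_add [ProperSpace E] {g : E → E} (hg : Continuous g)
    (hsupp : HasCompactSupport g) (hne : ∀ x, x + g x ≠ 0) : ∃ δ > 0, ∀ x, δ ≤ ‖x + g x‖ := by
  have hg_zero : ∀ᶠ x in cocompact E, g x = 0 :=
    coclosedCompact_eq_cocompact (X := E) ▸ hasCompactSupport_iff_eventuallyEq.1 hsupp
  have hlim : Tendsto (fun x => ‖x + g x‖) (cocompact E) atTop :=
    (tendsto_norm_cocompact_atTop (E := E)).congr' <| hg_zero.mono fun x hx => by simp [hx]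
  obtain ⟨x₀, hx₀⟩ := (show Continuous fun x => ‖x + g x‖ by fun_prop).exists_forall_le hlim
  exact ⟨‖x₀ + g x₀‖, norm_pos_iff.2 (hne x₀), hx₀⟩

section RadialPush

variable [NormedSpace ℝ E]

/-- The radial map fixing every `y` with `ρ ≤ ‖y‖` and sending every other `y ≠ 0` to the sphere
of radius `ρ` along its ray; at `y = 0` it takes the junk value `0`. -/
noncomputable def radialPush (ρ : ℝ) (y : E) : E :=
  max ρ ‖y‖ • NormedSpace.normalize y

theorem radialPush_of_le {ρ : ℝ} {y : E} (hy : ρ ≤ ‖y‖) : radialPush ρ y = y := by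
  rw [radialPush, max_eq_right hy, NormedSpace.norm_smul_normalize]

theorem norm_radialPush {ρ : ℝ} {y : E} (hy : y ≠ 0) : ‖radialPush ρ y‖ = max ρ ‖y‖ := by
  rw [radialPush, norm_smul, NormedSpace.norm_normalize hy, mul_one,
    Real.norm_of_nonneg (le_max_of_le_right (norm_nonneg y))]

theorem norm_normalize_sub_normalize_le (x : E) {y : E} (hy : y ≠ 0) :
    ‖NormedSpace.normalize x - NormedSpace.normalize y‖ ≤ 2 * ‖x - y‖ / ‖y‖ := by
  have hx_norm : ‖NormedSpace.normalize x‖ ≤ 1 := by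
    rcases eq_or_ne x 0 with rfl | hx
    · simp
    · exact (NormedSpace.norm_normalize hx).le
  rw [le_div_iff₀ (norm_pos_iff.2 hy), mul_comm]
  have hsplit : ‖y‖ • (NormedSpace.normalize x - NormedSpace.normalize y) =
      (‖y‖ - ‖x‖) • NormedSpace.normalize x + (x - y) := by
    rw [smul_sub, sub_smul, NormedSpace.norm_smul_normalize, NormedSpace.norm_smul_normalize]
    abel
  calc ‖y‖ * ‖NormedSpace.normalize x - NormedSpace.normalize y‖
      = ‖(‖y‖ - ‖x‖) • NormedSpace.normalize x + (x - y)‖ := by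
        rw [← hsplit, norm_smul, norm_norm]
    _ ≤ ‖‖y‖ - ‖x‖‖ * 1 + ‖x - y‖ := by
        refine (norm_add_le _ _).trans ?_
        rw [norm_smul]
        gcongr
    _ ≤ 2 * ‖x - y‖ := by
        have := norm_sub_rev y x ▸ abs_norm_sub_norm_le y x
        rw [Real.norm_eq_abs]
        linarith

theorem lipschitzOnWith_radialPush {ρ δ : ℝ} (hδ : 0 < δ) :
    LipschitzOnWith (1 + 2 * max (ρ / δ) 1).toNNReal (radialPush ρ : E → E) {y | δ ≤ ‖y‖} := by
  refine LipschitzOnWith.of_dist_le_mul fun x hx y hy => ?_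
  have hx_norm : 0 < ‖x‖ := hδ.trans_le hx
  have hy_norm : 0 < ‖y‖ := hδ.trans_le hy
  have hratio : max ρ ‖y‖ / ‖y‖ ≤ max (ρ / δ) 1 := by
    rw [div_le_iff₀ hy_norm]
    refine max_le ?_ (le_mul_of_one_le_left hy_norm.le (le_max_right _ _))
    calc ρ = ρ / δ * δ := (div_mul_cancel₀ ρ hδ.ne').symm
      _ ≤ max (ρ / δ) 1 * δ := by gcongr; exact le_max_left _ _
      _ ≤ max (ρ / δ) 1 * ‖y‖ := by gcongr; exact hy
  have hsplit : radialPush ρ x - radialPush ρ y =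
      (max ρ ‖x‖ - max ρ ‖y‖) • NormedSpace.normalize x +
        max ρ ‖y‖ • (NormedSpace.normalize x - NormedSpace.normalize y) := by
    simp only [radialPush, sub_smul, smul_sub]
    abel
  rw [Real.coe_toNNReal _ (by positivity), dist_eq_norm, dist_eq_norm, hsplit]
  calc _ ≤ |max ρ ‖x‖ - max ρ ‖y‖| + max ρ ‖y‖ * (2 * ‖x - y‖ / ‖y‖) := by
        refine (norm_add_le _ _).trans ?_
        rw [norm_smul, norm_smul, NormedSpace.norm_normalize (norm_pos_iff.1 hx_norm), mul_one,
          Real.norm_of_nonneg (le_max_of_le_right hy_norm.le), Real.norm_eq_abs]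
        gcongr
        exact norm_normalize_sub_normalize_le x (norm_pos_iff.1 hy_norm)
    _ = |max ρ ‖x‖ - max ρ ‖y‖| + 2 * (max ρ ‖y‖ / ‖y‖) * ‖x - y‖ := by ring
    _ ≤ ‖x - y‖ + 2 * max (ρ / δ) 1 * ‖x - y‖ := by
        gcongr
        exact (abs_max_sub_max_le_max _ _ _ _).trans (by simpa using abs_norm_sub_norm_le x y)
    _ = (1 + 2 * max (ρ / δ) 1) * ‖x - y‖ := by ring

end RadialPush

variable [InnerProductSpace ℝ E]

theorem differentiableAt_radialPush {ρ : ℝ} {y : E} (hy : y ≠ 0) (hρ : ‖y‖ < ρ) :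
    DifferentiableAt ℝ (radialPush ρ) y := by
  have heq : radialPush ρ =ᶠ[𝓝 y] fun z : E => ρ • ‖z‖⁻¹ • z := by
    filter_upwards [continuous_norm.continuousAt.eventually_lt continuousAt_const hρ] with z hz
    rw [radialPush, max_eq_left hz.le, NormedSpace.normalize]
  refine DifferentiableAt.congr_of_eventuallyEq ?_ heq
  have hnorm : DifferentiableAt ℝ (norm : E → ℝ) y := differentiableAt_id.norm ℝ hy
  exact ((hnorm.inv (norm_ne_zero_iff.2 hy)).smul differentiableAt_id).const_smul ρ

theorem inner_apply_eq_zero_of_norm_eventuallyEq {F : Type*} [NormedAddCommGroup F]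
    [NormedSpace ℝ F] {r : F → E} {r' : F →L[ℝ] E} {x : F} {ρ : ℝ} (hr : HasFDerivAt r r' x)
    (hρ : ∀ᶠ y in 𝓝 x, ‖r y‖ = ρ) (v : F) : inner ℝ (r x) (r' v) = 0 := by
  have hconst : (fun y => ‖r y‖ ^ 2) =ᶠ[𝓝 x] fun _ => ρ ^ 2 := by
    filter_upwards [hρ] with y hy
    rw [hy]
  have hderiv := hr.norm_sq.unique ((hasFDerivAt_const (ρ ^ 2) x).congr_of_eventuallyEq hconst)
  simpa using congrArg (fun A => A v) hderiv

variable [FiniteDimensional ℝ E]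

theorem det_eq_zero_of_norm_eventuallyEq {r : E → E} {r' : E →L[ℝ] E} {x : E} {ρ : ℝ}
    (hr : HasFDerivAt r r' x) (hρ : ∀ᶠ y in 𝓝 x, ‖r y‖ = ρ) (hρ_ne : ρ ≠ 0) : r'.det = 0 := by
  by_contra hdet
  obtain ⟨v, hv⟩ := (LinearMap.equivOfDetNeZero (r' : E →ₗ[ℝ] E) hdet).surjective (r x)
  replace hv : r' v = r x := hv
  have hzero := inner_apply_eq_zero_of_norm_eventuallyEq hr hρ v
  rw [hv, real_inner_self_eq_norm_sq, hρ.self_of_nhds] at hzero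
  exact hρ_ne (pow_eq_zero_iff two_ne_zero |>.1 hzero)

theorem exists_norm_ne_of_eq_id_off_ball {r : E → E} {ρ : ℝ} {K : ℝ≥0} (hρ : 0 < ρ)
    (hr : LipschitzWith K r) (hdiff : ∀ x ∈ Metric.ball 0 ρ, DifferentiableAt ℝ r x)
    (hid : ∀ x ∉ Metric.ball 0 ρ, r x = x) : ∃ x ∈ Metric.ball 0 ρ, ‖r x‖ ≠ ρ := by
  by_contra! hnorm
  borelize E
  let μ : Measure E := Measure.addHaar
  let g : E → E := fun x => r x - id x
  have hg_diff : ∀ x ∈ Metric.ball (0 : E) ρ, DifferentiableAt ℝ g x := fun x hx =>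
    (hdiff x hx).sub differentiableAt_id
  have hdet : ∀ x ∈ Metric.ball (0 : E) ρ,
      (ContinuousLinearMap.id ℝ E + fderiv ℝ g x).det = 0 := by
    intro x hx
    have hr' : HasFDerivAt r (ContinuousLinearMap.id ℝ E + fderiv ℝ g x) x := by
      refine ((hasFDerivAt_id x).add (hg_diff x hx).hasFDerivAt).congr_of_eventuallyEq
        (Eventually.of_forall fun y => ?_)
      simp [g]
    exact det_eq_zero_of_norm_eventuallyEq hr'
      ((Metric.isOpen_ball.eventually_mem hx).mono hnorm) hρ.ne'
  have hvol := setIntegral_det_id_add_fderiv (μ := μ) Metric.isOpen_ball.measurableSet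
    measure_ball_lt_top.ne (hr.sub LipschitzWith.id) hg_diff fun x hx => by simp [hid x hx]
  rw [setIntegral_eq_zero_of_forall_eq_zero hdet] at hvol
  exact (ENNReal.toReal_pos (Metric.measure_ball_pos μ 0 hρ).ne' measure_ball_lt_top.ne).ne hvol

-- Otherwise pushing `x + g x` radially out of a large ball would contradict
-- `exists_norm_ne_of_eq_id_off_ball`.
theorem exists_add_eq_zero_of_contDiff {g : E → E} (hg : ContDiff ℝ 1 g)
    (hsupp : HasCompactSupport g) : ∃ x, x + g x = 0 := by
  by_contra! hne
  obtain ⟨δ, hδ, hδ_le⟩ := exists_pos_le_norm_add hg.continuous hsupp hne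
  obtain ⟨K, hK⟩ := hg.lipschitzWith_of_hasCompactSupport hsupp one_ne_zero
  obtain ⟨C, hC⟩ := hsupp.exists_bound_of_continuous hg.continuous
  obtain ⟨R, hR, hR_supp⟩ := hsupp.isCompact.isBounded.subset_closedBall_lt 0 0
  have hC_nonneg : 0 ≤ C := (norm_nonneg _).trans (hC 0)
  have hg_zero : ∀ x, R < ‖x‖ → g x = 0 := fun x hx =>
    image_eq_zero_of_notMem_tsupport fun hmem =>
      hx.not_ge (mem_closedBall_zero_iff.1 (hR_supp hmem))
  set ρ := R + C + 1
  have hlt : ∀ x ∈ Metric.ball (0 : E) ρ, ‖x + g x‖ < ρ := by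
    intro x hx
    rcases le_or_gt ‖x‖ R with hxR | hxR
    · linarith [norm_add_le x (g x), hC x]
    · simpa [hg_zero x hxR] using hx
  have hlip := (lipschitzOnWith_radialPush (E := E) (ρ := ρ) hδ).comp
    (LipschitzWith.id.add hK).lipschitzOnWith (s := Set.univ) fun x _ => hδ_le x
  obtain ⟨x, hx, hx_ne⟩ := exists_norm_ne_of_eq_id_off_ball (by positivity : 0 < ρ)
    (lipschitzOnWith_univ.1 hlip)
    (fun x hx => (differentiableAt_radialPush (hne x) (hlt x hx)).comp x
      (differentiableAt_id.add (hg.differentiable one_ne_zero x)))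
    fun x hx => by
      have hρx : ρ ≤ ‖x‖ := by simpa using hx
      simp [hg_zero x (by linarith), radialPush_of_le hρx]
  exact hx_ne ((norm_radialPush (hne x)).trans (max_eq_left (hlt x hx).le))

theorem exists_add_eq_zero_of_continuous {g : E → E} (hg : Continuous g)
    (hsupp : HasCompactSupport g) : ∃ x, x + g x = 0 := by
  by_contra! hne
  obtain ⟨h, hh, hdist, hh_supp⟩ := hg.exists_contDiff_approx 1
    (ε := fun x => ‖x + g x‖) (by fun_prop) fun x => norm_pos_iff.2 (hne x)
  obtain ⟨x, hx⟩ := exists_add_eq_zero_of_contDiff hh (hsupp.mono hh_supp)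
  have hlt : dist (h x) (g x) < ‖x + g x‖ := hdist x
  rw [dist_eq_norm', sub_eq_add_neg, ← eq_neg_of_add_eq_zero_left hx, add_comm] at hlt
  exact hlt.false

theorem exists_eq_zero_of_eventually_inner_pos {T : E → E} (hT : Continuous T)
    (hpos : ∀ᶠ x in Bornology.cobounded E, 0 < inner ℝ (T x) x) : ∃ x, T x = 0 := by
  obtain ⟨R, -, hR⟩ := hasBasis_cobounded_norm.eventually_iff.1 hpos
  obtain ⟨χ, hχ_one, -, hχ_supp, hχ_mem⟩ := exists_continuous_one_zero_of_isCompact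
    (isCompact_closedBall (0 : E) R) isClosed_empty (Set.disjoint_empty _)
  obtain ⟨x, hx⟩ := exists_add_eq_zero_of_continuous
    (g := fun x => χ x • (T x - x)) (by fun_prop) hχ_supp.smul_right
  have hcomb : (1 - χ x) • x + χ x • T x = 0 := by
    rw [← hx, smul_sub, sub_smul, one_smul]
    abel
  by_cases hxR : ‖x‖ ≤ R
  · refine ⟨x, ?_⟩
    simpa [hχ_one (mem_closedBall_zero_iff.2 hxR)] using hcomb
  · have hTx : 0 < inner ℝ (T x) x := hR (not_le.1 hxR).le
    have hinner : (1 - χ x) * ‖x‖ ^ 2 + χ x * inner ℝ (T x) x = 0 := by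
      simpa [inner_add_left, real_inner_smul_left] using congrArg (inner ℝ · x) hcomb
    have hx_pos : 0 < ‖x‖ ^ 2 := by
      have : x ≠ 0 := by rintro rfl; simp at hTx
      positivity
    exact absurd hinner (convex_Ioi (0 : ℝ) hx_pos hTx (sub_nonneg.2 (hχ_mem x).2) (hχ_mem x).1
      (sub_add_cancel 1 _)).ne'

end Brouwer

theorem exists_eq_zero_of_eventually_apply_self_pos {F : Type*} [NormedAddCommGroup F]
    [NormedSpace ℝ F] [FiniteDimensional ℝ F] {A : F → StrongDual ℝ F} (hA : Continuous A)
    (hpos : ∀ᶠ x in Bornology.cobounded F, 0 < A x x) : ∃ x, A x = 0 := by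
  let e : EuclideanSpace ℝ (Fin (Module.finrank ℝ F)) ≃L[ℝ] F := toEuclidean.symm
  let T := fun y => (InnerProductSpace.toDual ℝ _).symm
    ((A (e y)).comp (e : EuclideanSpace ℝ (Fin (Module.finrank ℝ F)) →L[ℝ] F))
  have hT : Continuous T := by
    unfold T
    fun_prop
  have hinner : ∀ y z, inner ℝ (T y) z = A (e y) (e z) := fun y z => by simp [T]
  obtain ⟨y, hy⟩ := exists_eq_zero_of_eventually_inner_pos hT <| by
    simpa [hinner] using e.antilipschitz.tendsto_cobounded.eventually hpos
  refine ⟨e y, ?_⟩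
  ext x
  simpa [hy] using (hinner y (e.symm x)).symm

section WeakConvergence

variable {E F ι : Type*} [NormedAddCommGroup E] [NormedSpace ℝ E]
  [NormedAddCommGroup F] [NormedSpace ℝ F]

/-- Reflexivity of a normed space: the canonical isometry into the bidual is onto. -/
def IsReflexiveSpace (E : Type*) [NormedAddCommGroup E] [NormedSpace ℝ E] : Prop :=
  Function.Surjective (NormedSpace.inclusionInDoubleDual ℝ E)

/-- Weak convergence of a family along a filter; along `atTop` on `ℕ` it unfolds to
`WeakConvergent`. -/
def TendstoWeakly (u : ι → E) (l : Filter ι) (x : E) : Prop :=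
  ∀ φ : StrongDual ℝ E, Tendsto (fun i => φ (u i)) l (𝓝 (φ x))

theorem IsReflexiveSpace.dual (hE : IsReflexiveSpace E) : IsReflexiveSpace (StrongDual ℝ E) := by
  intro Φ
  refine ⟨Φ.comp (NormedSpace.inclusionInDoubleDual ℝ E), ?_⟩
  ext ψ
  obtain ⟨x, rfl⟩ := hE ψ
  simp

theorem IsReflexiveSpace.prod (hE : IsReflexiveSpace E) (hF : IsReflexiveSpace F) :
    IsReflexiveSpace (E × F) := by
  intro Ψ
  obtain ⟨x, hx⟩ := hE (Ψ.comp ((ContinuousLinearMap.compL ℝ (E × F) E ℝ).flip (.fst ℝ E F)))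
  obtain ⟨y, hy⟩ := hF (Ψ.comp ((ContinuousLinearMap.compL ℝ (E × F) F ℝ).flip (.snd ℝ E F)))
  refine ⟨(x, y), ?_⟩
  ext φ
  have hφ : φ = (φ.comp (.inl ℝ E F)).comp (.fst ℝ E F) +
      (φ.comp (.inr ℝ E F)).comp (.snd ℝ E F) :=
    ContinuousLinearMap.ext fun p => (φ.comp_inl_add_comp_inr p).symm
  calc φ (x, y) = φ.comp (.inl ℝ E F) x + φ.comp (.inr ℝ E F) y :=
        (φ.comp_inl_add_comp_inr (x, y)).symm
    _ = Ψ ((φ.comp (.inl ℝ E F)).comp (.fst ℝ E F)) +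
        Ψ ((φ.comp (.inr ℝ E F)).comp (.snd ℝ E F)) :=
      congrArg₂ (· + ·) (DFunLike.congr_fun hx (φ.comp (.inl ℝ E F)))
        (DFunLike.congr_fun hy (φ.comp (.inr ℝ E F)))
    _ = Ψ φ := by rw [← map_add, ← hφ]

theorem TendstoWeakly.prodMk {u : ι → E} {v : ι → F} {l : Filter ι} {x : E} {y : F}
    (hu : TendstoWeakly u l x) (hv : TendstoWeakly v l y) :
    TendstoWeakly (fun i => (u i, v i)) l (x, y) := by
  intro φ
  simp only [← φ.comp_inl_add_comp_inr]
  exact (hu _).add (hv _)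

theorem TendstoWeakly.mem_of_isClosed_of_convex {u : ι → E} {l : Filter ι} [l.NeBot] {x : E}
    (hu : TendstoWeakly u l x) {s : Set E} (hs : Convex ℝ s) (hs_closed : IsClosed s)
    (hmem : ∀ᶠ i in l, u i ∈ s) : x ∈ s := by
  by_contra hx
  obtain ⟨φ, c, hφs, hφx⟩ := geometric_hahn_banach_closed_point hs hs_closed hx
  exact hφx.not_ge (le_of_tendsto (hu φ) (hmem.mono fun i hi => (hφs _ hi).le))

theorem IsReflexiveSpace.exists_tendstoWeakly (hE : IsReflexiveSpace E) {u : ι → E}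
    {U : Ultrafilter ι} {C : ℝ} (hC : ∀ᶠ i in U, ‖u i‖ ≤ C) : ∃ x, TendstoWeakly u U x := by
  let J : E → WeakDual ℝ (StrongDual ℝ E) := fun y =>
    StrongDual.toWeakDual (NormedSpace.inclusionInDoubleDual ℝ E y)
  have hcompact := WeakDual.isCompact_closedBall (0 : StrongDual ℝ (StrongDual ℝ E)) C
  have hmem : ∀ᶠ i in U, J (u i) ∈ WeakDual.toStrongDual ⁻¹' Metric.closedBall
      (0 : StrongDual ℝ (StrongDual ℝ E)) C := by
    filter_upwards [hC] with i hi
    exact (dist_zero_right (NormedSpace.inclusionInDoubleDual ℝ E (u i))).trans_le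
      ((NormedSpace.double_dual_bound ℝ E (u i)).trans hi)
  obtain ⟨ψ, -, hψ⟩ := isCompact_iff_ultrafilter_le_nhds.1 hcompact (U.map (J ∘ u))
    (le_principal_iff.2 hmem)
  obtain ⟨x, hx⟩ := hE (WeakDual.toStrongDual ψ)
  refine ⟨x, fun φ => ?_⟩
  have hlim : Tendsto (fun i => J (u i) φ) U (𝓝 (ψ φ)) :=
    (WeakDual.eval_continuous φ).continuousAt.tendsto.comp hψ
  rwa [show ψ φ = φ x from congrArg (fun Φ => Φ φ) hx.symm] at hlim

section Extraction

variable {u : ι → E} {l : Filter ι} {x : E}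

theorem TendstoWeakly.exists_finite_subset [l.NeBot] (hu : TendstoWeakly u l x) {s : Set ι}
    (hs : s ∈ l) (n : ℕ) (R : ℝ) :
    ∃ t ⊆ s, t.Finite ∧ ∀ φ : Fin n → StrongDual ℝ E, (∀ j, ‖φ j‖ ≤ R) →
      ∃ i ∈ t, ∀ j, |φ j (u i - x)| < 1 := by
  let ball : Set (WeakDual ℝ E) := WeakDual.toStrongDual ⁻¹' Metric.closedBall 0 R
  let near : ι → Set (Fin n → WeakDual ℝ E) := fun i => {φ | ∀ j, |φ j (u i - x)| < 1}
  have hcompact : IsCompact (Set.univ.pi fun _ : Fin n => ball) :=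
    isCompact_univ_pi fun _ => WeakDual.isCompact_closedBall 0 R
  have hopen : ∀ i ∈ s, IsOpen (near i) := fun i _ => by
    simp only [near, Set.ofPred_forall]
    exact isOpen_iInter_of_finite fun j => isOpen_lt
      ((WeakDual.eval_continuous _).comp (continuous_apply j)).abs continuous_const
  have hcover : Set.univ.pi (fun _ : Fin n => ball) ⊆ ⋃ i ∈ s, near i := by
    intro φ _
    have hnear : ∀ᶠ i in l, ∀ j, |φ j (u i - x)| < 1 := eventually_all.2 fun j => by
      have hlim : Tendsto (fun i => |φ j (u i - x)|) l (𝓝 0) := by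
        simpa using ((hu (WeakDual.toStrongDual (φ j))).sub_const (φ j x)).abs
      exact hlim.eventually_lt_const one_pos
    obtain ⟨i, hi, his⟩ := (hnear.and hs).exists
    exact Set.mem_biUnion his hi
  obtain ⟨t, hts, ht, hcover_t⟩ := hcompact.elim_finite_subcover_image hopen hcover
  refine ⟨t, hts, ht, fun φ hφ => ?_⟩
  obtain ⟨i, hi, hφi⟩ := Set.mem_iUnion₂.1 (hcover_t (a := fun j => StrongDual.toWeakDual (φ j))
    fun j _ => mem_closedBall_zero_iff.2 (hφ j))
  exact ⟨i, hi, hφi⟩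

-- Kaplansky's countable tightness of the weak topology.
theorem TendstoWeakly.exists_countable_subset [l.NeBot] (hu : TendstoWeakly u l x) {s : Set ι}
    (hs : s ∈ l) :
    ∃ t ⊆ s, t.Countable ∧ ∀ (n : ℕ) (φ : Fin n → StrongDual ℝ E),
      ∃ i ∈ t, ∀ j, |φ j (u i - x)| < 1 := by
  choose t hts ht_finite ht using fun p : ℕ × ℕ => hu.exists_finite_subset hs p.1 p.2
  refine ⟨⋃ p, t p, Set.iUnion_subset hts, Set.countable_iUnion fun p => (ht_finite p).countable,
    fun n φ => ?_⟩
  obtain ⟨R, hR⟩ := exists_nat_ge ‖φ‖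
  obtain ⟨i, hi, hφi⟩ := ht (n, R) φ fun j => (norm_le_pi_norm φ j).trans hR
  exact ⟨i, Set.mem_iUnion_of_mem _ hi, hφi⟩

theorem exists_separating_seq_of_isSeparable {s : Set E} (hs : TopologicalSpace.IsSeparable s) :
    ∃ φ : ℕ → StrongDual ℝ E, ∀ y ∈ s, (∀ n, φ n y = 0) → y = 0 := by
  obtain ⟨c, hc, hsc⟩ := hs
  obtain ⟨e, he⟩ := (hc.insert 0).exists_eq_range (Set.insert_nonempty 0 c)
  choose φ hφ_norm hφ using fun n => exists_dual_vector'' ℝ (e n)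
  refine ⟨φ, fun y hy hzero => ?_⟩
  have hdense : y ∈ closure (Set.range e) := he ▸ closure_mono (Set.subset_insert 0 c) (hsc hy)
  have hbound : ∀ n, ‖y‖ ≤ 2 * dist y (e n) := fun n => by
    have hen : ‖e n‖ ≤ ‖y - e n‖ := by
      calc ‖e n‖ = -φ n (y - e n) := by simp [hzero n, hφ n]
        _ ≤ ‖φ n (y - e n)‖ := neg_le_abs _
        _ ≤ ‖y - e n‖ := (φ n).le_of_opNorm_le_of_le (hφ_norm n) le_rfl |>.trans (one_mul _).le
    rw [dist_eq_norm]
    linarith [norm_le_norm_add_norm_sub' y (e n)]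
  refine norm_le_zero_iff.1 (le_of_forall_pos_le_add fun ε hε => ?_)
  obtain ⟨_, ⟨n, rfl⟩, hn⟩ := Metric.mem_closure_iff.1 hdense (ε / 2) (half_pos hε)
  linarith [hbound n]

theorem IsReflexiveSpace.tendstoWeakly_of_separating (hE : IsReflexiveSpace E) {C : ℝ}
    (hC : ∀ᶠ i in l, ‖u i‖ ≤ C) {S : Submodule ℝ E} (hS : IsClosed (S : Set E))
    (huS : ∀ᶠ i in l, u i ∈ S) (hx : x ∈ S) {φ : ℕ → StrongDual ℝ E}
    (hφ : ∀ y ∈ S, (∀ n, φ n y = 0) → y = 0)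
    (hlim : ∀ n, Tendsto (fun i => φ n (u i)) l (𝓝 (φ n x))) : TendstoWeakly u l x := by
  intro ψ
  rw [tendsto_iff_ultrafilter]
  intro U hU
  obtain ⟨y, hy⟩ := hE.exists_tendstoWeakly (hC.filter_mono hU)
  have hyS : y ∈ S := hy.mem_of_isClosed_of_convex S.convex hS (huS.filter_mono hU)
  have hyx : y - x = 0 := hφ _ (S.sub_mem hyS hx) fun n => by
    rw [map_sub, sub_eq_zero]
    exact tendsto_nhds_unique (hy (φ n)) ((hlim n).mono_left hU)
  rw [← sub_eq_zero.1 hyx]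
  exact hy ψ

theorem IsReflexiveSpace.exists_seq_weakConvergent (hE : IsReflexiveSpace E) [l.NeBot] {C : ℝ}
    (hC : ∀ᶠ i in l, ‖u i‖ ≤ C) (hu : TendstoWeakly u l x) {s : ℕ → Set ι}
    (hs : ∀ k, s k ∈ l) :
    ∃ i : ℕ → ι, (∀ k, i k ∈ s k) ∧ WeakConvergent (fun k => u (i k)) x := by
  choose t hts ht_countable ht using fun k => hu.exists_countable_subset (inter_mem hC (hs k))
  let S := (Submodule.span ℝ (insert x (⋃ k, u '' t k))).topologicalClosure
  have hsub : insert x (⋃ k, u '' t k) ⊆ (S : Set E) :=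
    Submodule.subset_span.trans (Submodule.le_topologicalClosure _)
  have hS_sep : TopologicalSpace.IsSeparable (S : Set E) :=
    (Set.countable_iUnion fun k => (ht_countable k).image u).insert x
      |>.isSeparable.span.closure
  obtain ⟨φ, hφ⟩ := exists_separating_seq_of_isSeparable hS_sep
  choose i hi hφi using fun k => ht k k fun j : Fin k => ((k : ℝ) + 1) • φ j
  refine ⟨i, fun k => (hts k (hi k)).2, hE.tendstoWeakly_of_separating
    (Eventually.of_forall fun k => (hts k (hi k)).1) (Submodule.isClosed_topologicalClosure _)
    (Eventually.of_forall fun k => hsub <| .inr <| Set.mem_iUnion_of_mem k ⟨i k, hi k, rfl⟩)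
    (hsub (.inl rfl)) hφ fun n => ?_⟩
  rw [tendsto_iff_dist_tendsto_zero]
  refine squeeze_zero' (Eventually.of_forall fun _ => dist_nonneg) ?_
    tendsto_one_div_add_atTop_nhds_zero_nat
  filter_upwards [eventually_gt_atTop n] with k hk
  have hlt := hφi k ⟨n, hk⟩
  rw [smul_apply, smul_eq_mul, abs_mul, abs_of_pos (by positivity),
    ← lt_div_iff₀' (by positivity), map_sub] at hlt
  exact hlt.le

end Extraction

end WeakConvergence

section Operators

variable {V : X → X →L[ℝ] ℝ}

theorem BoundedOperator.exists_norm_le (hV : BoundedOperator V) (C : ℝ) :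
    ∃ C', ∀ u, ‖u‖ ≤ C → ‖V u‖ ≤ C' := by
  obtain ⟨C', hC'⟩ := (hV _ Metric.isBounded_closedBall).exists_norm_le
  exact ⟨C', fun u hu => hC' _ ⟨u, mem_closedBall_zero_iff.2 hu, rfl⟩⟩

theorem Pseudomonotone.eq_of_tendstoWeakly {ι : Type*} {u : ι → X} {l : Filter ι} [l.NeBot]
    {x : X} {g : StrongDual ℝ X} {C : ℝ} (hpm : Pseudomonotone V) (hX : IsReflexiveSpace X)
    (hC : ∀ᶠ i in l, ‖(u i, V (u i))‖ ≤ C) (hu : TendstoWeakly u l x)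
    (hVu : TendstoWeakly (fun i => V (u i)) l g)
    (hlim : Tendsto (fun i => V (u i) (u i - x)) l (𝓝 0)) : g = V x := by
  have hsmall : ∀ k : ℕ, {i | |V (u i) (u i - x)| < 1 / ((k : ℝ) + 1)} ∈ l := fun k => by
    have hlim_abs : Tendsto (fun i => |V (u i) (u i - x)|) l (𝓝 0) := by simpa using hlim.abs
    exact hlim_abs.eventually_lt_const (by positivity)
  obtain ⟨i, hi, hweak⟩ :=
    (hX.prod hX.dual).exists_seq_weakConvergent hC (hu.prodMk hVu) hsmall
  have hweak_fst : WeakConvergent (fun k => u (i k)) x := fun φ =>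
    hweak (φ.comp (.fst ℝ X (StrongDual ℝ X)))
  have hweak_snd : WeakConvergentDual (fun k => V (u (i k))) g := fun z =>
    hweak ((NormedSpace.inclusionInDoubleDual ℝ X z).comp (.snd ℝ X (StrongDual ℝ X)))
  have hzero : Tendsto (fun k => V (u (i k)) (u (i k) - x)) atTop (𝓝 0) :=
    squeeze_zero_norm (fun k => (hi k).le) tendsto_one_div_add_atTop_nhds_zero_nat
  exact (hpm _ x g hweak_fst hweak_snd hzero.limsup_eq.le).1

theorem Pseudomonotone.tendsto_apply {ι : Type*} {u : ι → X} {l : Filter ι} {x : X} {C : ℝ}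
    (hpm : Pseudomonotone V) (hbdd : BoundedOperator V) (hX : IsReflexiveSpace X)
    (hC : ∀ᶠ i in l, ‖u i‖ ≤ C) (hu : TendstoWeakly u l x)
    (hlim : Tendsto (fun i => V (u i) (u i - x)) l (𝓝 0)) (w : X) :
    Tendsto (fun i => V (u i) w) l (𝓝 (V x w)) := by
  obtain ⟨C', hC'⟩ := hbdd.exists_norm_le C
  rw [tendsto_iff_ultrafilter]
  intro U hU
  have hVC : ∀ᶠ i in U, ‖V (u i)‖ ≤ C' := (hC.filter_mono hU).mono fun i => hC' _
  obtain ⟨g, hg⟩ := hX.dual.exists_tendstoWeakly hVC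
  have hpair : ∀ᶠ i in U, ‖(u i, V (u i))‖ ≤ max C C' := by
    filter_upwards [hC.filter_mono hU, hVC] with i hi hVi using max_le_max hi hVi
  rw [← hpm.eq_of_tendstoWeakly hX hpair (fun φ => (hu φ).mono_left hU) hg (hlim.mono_left hU)]
  exact hg (NormedSpace.inclusionInDoubleDual ℝ X w)

theorem Pseudomonotone.continuous_apply (hpm : Pseudomonotone V) (hbdd : BoundedOperator V)
    (hX : IsReflexiveSpace X) (w : X) : Continuous fun u => V u w := by
  refine continuous_iff_continuousAt.2 fun x => ?_
  have hnorm : ∀ᶠ u in 𝓝 x, ‖u‖ ≤ ‖x‖ + 1 :=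
    continuous_norm.continuousAt.eventually_le_const (lt_add_one _)
  obtain ⟨C', hC'⟩ := hbdd.exists_norm_le (‖x‖ + 1)
  refine hpm.tendsto_apply hbdd hX hnorm (fun φ => φ.continuous.tendsto x) ?_ w
  refine squeeze_zero_norm' (a := fun u => C' * ‖u - x‖) ?_ ?_
  · exact hnorm.mono fun u hu => (V u).le_of_opNorm_le (hC' u hu) _
  · exact Continuous.tendsto' (by fun_prop) _ _ (by simp)

theorem exists_mem_forall_apply_eq_of_eventually_lt (hV : ∀ w, Continuous fun u => V u w)
    {f : X →L[ℝ] ℝ} (hf : ∀ᶠ u in Bornology.cobounded X, f u < V u u) (S : Submodule ℝ X)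
    [FiniteDimensional ℝ S] : ∃ u ∈ S, ∀ w ∈ S, V u w = f w := by
  obtain ⟨u, hu⟩ := exists_eq_zero_of_eventually_apply_self_pos
    (A := fun u : S => (V u - f).comp S.subtypeL)
    (continuous_clm_apply.2 fun w =>
      ((hV w).comp continuous_subtype_val).sub continuous_const)
    ((S.subtypeₗᵢ.antilipschitz.tendsto_cobounded.eventually hf).mono fun _ => sub_pos.2)
  refine ⟨u, u.2, fun w hw => ?_⟩
  simpa [sub_eq_zero] using congrArg (fun A => A ⟨w, hw⟩) hu

theorem Pseudomonotone.mem_range_of_eventually_lt (hpm : Pseudomonotone V)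
    (hbdd : BoundedOperator V) (hX : IsReflexiveSpace X) {f : X →L[ℝ] ℝ}
    (hf : ∀ᶠ u in Bornology.cobounded X, f u < V u u) : f ∈ Set.range V := by
  obtain ⟨C, -, hC⟩ := hasBasis_cobounded_norm.eventually_iff.1 hf
  choose u hu_mem hu using fun S : Finset X =>
    exists_mem_forall_apply_eq_of_eventually_lt (hpm.continuous_apply hbdd hX) hf
      (Submodule.span ℝ (S : Set X))
  have hu_norm : ∀ S, ‖u S‖ ≤ C := fun S => by
    by_contra! hlt
    exact (hC hlt.le).ne' (hu S _ (hu_mem S))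
  have hu_apply : ∀ w, ∀ᶠ S in atTop, V (u S) w = f w := fun w =>
    (eventually_ge_atTop {w}).mono fun S hS =>
      hu S w (Submodule.subset_span (hS (Finset.mem_singleton_self w)))
  let U : Ultrafilter (Finset X) := Ultrafilter.of atTop
  have hU : ↑U ≤ (atTop : Filter (Finset X)) := Ultrafilter.of_le _
  obtain ⟨x, hx⟩ := hX.exists_tendstoWeakly (Eventually.of_forall hu_norm : ∀ᶠ S in U, _)
  have hlim : Tendsto (fun S => V (u S) (u S - x)) U (𝓝 0) := by
    have : Tendsto (fun S => f (u S) - f x) U (𝓝 0) := by simpa using (hx f).sub_const (f x)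
    refine this.congr' (((hu_apply x).filter_mono hU).mono fun S hS => ?_)
    simp only [map_sub, hS, hu S _ (hu_mem S)]
  refine ⟨x, ContinuousLinearMap.ext fun w => ?_⟩
  have hVw := hpm.tendsto_apply hbdd hX (Eventually.of_forall hu_norm) hx hlim w
  exact tendsto_nhds_unique hVw
    (tendsto_const_nhds.congr' (((hu_apply w).filter_mono hU).mono fun S hS => hS.symm))

theorem StronglyCoercive.eventually_lt (hV : StronglyCoercive V) (f : X →L[ℝ] ℝ) :
    ∀ᶠ u in Bornology.cobounded X, f u < V u u := by
  rw [StronglyCoercive, comap_norm_atTop] at hV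
  filter_upwards [hV.eventually_gt_atTop ‖f‖, Bornology.eventually_ne_cobounded 0] with u hu hu_ne
  exact ((le_abs_self _).trans (f.le_opNorm u)).trans_lt
    ((lt_div_iff₀ (norm_pos_iff.2 hu_ne)).1 hu)

end Operators

/-- **Surjectivity of pseudomonotone strongly coercive operators.**
If `X` is a real reflexive Banach space and `V : X → X*` is everywhere defined,
bounded, pseudomonotone and strongly coercive, then `V` is surjective. -/
theorem surjective_of_pseudomonotone_of_stronglyCoercive
    {X : Type*} [NormedAddCommGroup X] [NormedSpace ℝ X] [CompleteSpace X]
    (hrefl : Function.Surjective (NormedSpace.inclusionInDoubleDual ℝ X))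
    (V : X → X →L[ℝ] ℝ)
    (hbdd : BoundedOperator V)
    (hpm : Pseudomonotone V)
    (hcoer : StronglyCoercive V) :
    Function.Surjective V := by
  intro f
  exact hpm.mem_range_of_eventually_lt hbdd hrefl (hcoer.eventually_lt f)
end

section
/- (Pointwise nonlinear Picone inequality of Allegretto–Huang.) Let p > 1 be a real number, N ≥ 1 an integer, a, b ∈ ℝ^N vectors, and s, t real numbers with s ≥ 0 and t > 0. Then ‖a‖^p + (p − 1)·(s/t)^p·‖b‖^p − p·(s/t)^{p−1}·‖b‖^{p−2}·⟨b, a⟩ ≥ 0, where ⟨·,·⟩ is the Euclidean inner product on ℝ^N and the term ‖b‖^{p−2}·⟨b, a⟩ is interpreted as 0 when b = 0. Equivalently, if u, v are differentiable nonnegative (resp. positive) functions, this expresses the nonnegativity of the Picone integrand R(u,v) = |Du|^p − |Dv|^{p−2}(Dv, D(u^p / v^{p−1})) at each point. -/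
open RealInnerProductSpace

theorem mul_mul_rpow_sub_one_le_rpow_add_mul_rpow
    {p x y : ℝ} (hp : 1 ≤ p) (hx : 0 ≤ x) (hy : 0 ≤ y) :
    p * (x * y ^ (p - 1)) ≤ x ^ p + (p - 1) * y ^ p := by
  have hp_pos : 0 < p := by linarith
  have weighted_am_gm :
      (x ^ p) ^ (1 / p) * (y ^ p) ^ ((p - 1) / p) ≤ 1 / p * x ^ p + (p - 1) / p * y ^ p :=
    Real.geom_mean_le_arith_mean2_weighted (by positivity)
      (div_nonneg (by linarith) hp_pos.le) (by positivity) (by positivity) (by field_simp; ring)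
  rw [← Real.rpow_mul hx, ← Real.rpow_mul hy, mul_div_cancel₀ _ hp_pos.ne',
    mul_div_cancel₀ _ hp_pos.ne', Real.rpow_one] at weighted_am_gm
  calc p * (x * y ^ (p - 1))
      ≤ p * (1 / p * x ^ p + (p - 1) / p * y ^ p) := by gcongr
    _ = x ^ p + (p - 1) * y ^ p := by field_simp

section InnerProductSpace

variable {E : Type*} [SeminormedAddCommGroup E] [InnerProductSpace ℝ E]

theorem norm_rpow_sub_one_mul_real_inner_le (q : ℝ) (a b : E) :
    ‖b‖ ^ (q - 1) * ⟪b, a⟫ ≤ ‖b‖ ^ q * ‖a‖ := by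
  have cauchy_schwarz : ⟪b, a⟫ ≤ ‖b‖ * ‖a‖ := real_inner_le_norm b a
  rcases (norm_nonneg b).eq_or_lt with hb | hb
  · have inner_nonpos : ⟪b, a⟫ ≤ 0 := by rwa [← hb, zero_mul] at cauchy_schwarz
    exact (mul_nonpos_of_nonneg_of_nonpos (by positivity) inner_nonpos).trans (by positivity)
  · calc ‖b‖ ^ (q - 1) * ⟪b, a⟫
        ≤ ‖b‖ ^ (q - 1) * (‖b‖ * ‖a‖) := by gcongr
      _ = ‖b‖ ^ q * ‖a‖ := by
          rw [← mul_assoc, ← Real.rpow_add_one hb.ne', sub_add_cancel]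

theorem picone_pointwise_inequality_general {p r : ℝ} (hp : 1 ≤ p) (hr : 0 ≤ r) (a b : E) :
    0 ≤ ‖a‖ ^ p + (p - 1) * r ^ p * ‖b‖ ^ p
        - p * r ^ (p - 1) * (‖b‖ ^ (p - 2) * ⟪b, a⟫) := by
  have cauchy_schwarz : ‖b‖ ^ (p - 2) * ⟪b, a⟫ ≤ ‖b‖ ^ (p - 1) * ‖a‖ := by
    simpa only [sub_sub, one_add_one_eq_two] using norm_rpow_sub_one_mul_real_inner_le (p - 1) a b
  rw [sub_nonneg]
  calc p * r ^ (p - 1) * (‖b‖ ^ (p - 2) * ⟪b, a⟫)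
      ≤ p * r ^ (p - 1) * (‖b‖ ^ (p - 1) * ‖a‖) := by gcongr
    _ = p * (‖a‖ * (r * ‖b‖) ^ (p - 1)) := by rw [Real.mul_rpow hr (norm_nonneg b)]; ring
    _ ≤ ‖a‖ ^ p + (p - 1) * (r * ‖b‖) ^ p :=
        mul_mul_rpow_sub_one_le_rpow_add_mul_rpow hp (norm_nonneg a) (by positivity)
    _ = ‖a‖ ^ p + (p - 1) * r ^ p * ‖b‖ ^ p := by
        rw [Real.mul_rpow hr (norm_nonneg b), mul_assoc]

end InnerProductSpace

/-- **Pointwise nonlinear Picone inequality (Allegretto–Huang).**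
For `p > 1`, vectors `a b : ℝ^N`, and reals `s ≥ 0`, `t > 0`,
`‖a‖^p + (p-1) (s/t)^p ‖b‖^p - p (s/t)^(p-1) ‖b‖^(p-2) ⟨b, a⟩ ≥ 0`.
(The term `‖b‖^(p-2) ⟨b, a⟩` vanishes automatically when `b = 0`, since then
`⟨b, a⟩ = 0`; all powers are real powers.) -/
theorem picone_pointwise_inequality
    {N : ℕ} (hN : 1 ≤ N) {p : ℝ} (hp : 1 < p)
    (a b : EuclideanSpace ℝ (Fin N)) (s t : ℝ) (hs : 0 ≤ s) (ht : 0 < t) :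
    0 ≤ ‖a‖ ^ p + (p - 1) * (s / t) ^ p * ‖b‖ ^ p
        - p * (s / t) ^ (p - 1) * (‖b‖ ^ (p - 2) * ⟪b, a⟫) :=
  picone_pointwise_inequality_general hp.le (div_nonneg hs ht.le) a b
end

section
/- Let (Ω, μ) be a measure space, p > 1, N ≥ 1, and let f : Ω × ℝ × ℝ^N → ℝ. Assume there exist essentially bounded measurable functions a, ϑ : Ω → ℝ with a ≥ 0 μ-a.e. such that: (i) for μ-a.e. z ∈ Ω, all x ≥ 0 and all y ∈ ℝ^N, |f(z, x, y)| ≤ a(z)(1 + x^{p−1} + ‖y‖^{p−1}); and (ii) for every ε > 0 there exists M₁ = M₁(ε) > 0 such that for μ-a.e. z ∈ Ω, all x ≥ M₁ and all y ∈ ℝ^N, f(z, x, y) ≤ (ϑ(z) + ε)·x^{p−1}. Then for every ε > 0 there exists a constant c₆ > 0 such that for μ-a.e. z ∈ Ω, all x ≥ 0 and all y ∈ ℝ^N, f(z, x, y)·x ≤ (ϑ(z) + ε)·x^p + c₆·‖y‖^{p−1} + c₆. -/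
open MeasureTheory

open Filter

/-!
Multiplying the growth bound by `x` gives `f * x ≤ A * (x + x ^ p + x * w)`, where `A` bounds `a`.
This is increasing in `x`, so on `0 < x ≤ M` it costs only a constant multiple of `1 + w`, and there
`ϑ * x ^ p` is bounded below. On `M ≤ x` the asymptotic bound multiplied by `x` already suffices.
-/

section Pointwise

variable {p A T M θ t w x : ℝ}

theorem rpow_sub_one_mul_self (hp : p ≠ 0) (hx : 0 ≤ x) : x ^ (p - 1) * x = x ^ p := by
  rw [← Real.rpow_add_one' hx (by rwa [sub_add_cancel]), sub_add_cancel]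

theorem mul_le_of_le_growth (hp : 0 < p) (hA : 0 ≤ A) (hw : 0 ≤ w) (hx : 0 ≤ x) (hxM : x ≤ M)
    (ht : t ≤ A * (1 + x ^ (p - 1) + w)) : t * x ≤ A * (M + M ^ p + M * w) := by
  calc t * x ≤ A * (1 + x ^ (p - 1) + w) * x := by gcongr
    _ = A * (x + x ^ p + x * w) := by rw [← rpow_sub_one_mul_self hp.ne' hx]; ring
    _ ≤ A * (M + M ^ p + M * w) := by gcongr

theorem neg_mul_rpow_le_mul_rpow (hp : 0 ≤ p) (hT : 0 ≤ T) (hθ : -T ≤ θ) (hx : 0 ≤ x)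
    (hxM : x ≤ M) : -(T * M ^ p) ≤ θ * x ^ p :=
  calc -(T * M ^ p) ≤ -(T * x ^ p) := by gcongr
    _ = -T * x ^ p := (neg_mul _ _).symm
    _ ≤ θ * x ^ p := by gcongr

theorem mul_le_mul_rpow_add_of_le_growth (hp : 0 < p) (hA : 0 ≤ A) (hT : 0 ≤ T) (hM : 0 ≤ M)
    (hθ : -T ≤ θ) (hw : 0 ≤ w) (hx : 0 < x) (hgrowth : t ≤ A * (1 + x ^ (p - 1) + w))
    (hlarge : M ≤ x → t ≤ θ * x ^ (p - 1)) :
    t * x ≤ θ * x ^ p + (A * (M + M ^ p) + T * M ^ p) * w + (A * (M + M ^ p) + T * M ^ p) := by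
  rcases le_total M x with hMx | hxM
  · have hmain : t * x ≤ θ * x ^ p :=
      calc t * x ≤ θ * x ^ (p - 1) * x := by gcongr; exact hlarge hMx
        _ = θ * x ^ p := by rw [mul_assoc, rpow_sub_one_mul_self hp.ne' hx.le]
    have hrest : 0 ≤ (A * (M + M ^ p) + T * M ^ p) * w := by positivity
    have hconst : 0 ≤ A * (M + M ^ p) + T * M ^ p := by positivity
    linarith
  · have hsmall : t * x ≤ A * (M + M ^ p + M * w) := mul_le_of_le_growth hp hA hw hx.le hxM hgrowth
    have hθx : -(T * M ^ p) ≤ θ * x ^ p := neg_mul_rpow_le_mul_rpow hp.le hT hθ hx.le hxM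
    have hcoeff : A * M * w ≤ (A * (M + M ^ p) + T * M ^ p) * w := by
      gcongr
      have : 0 ≤ A * M ^ p + T * M ^ p := by positivity
      linarith
    linarith

end Pointwise

theorem growth_estimate_from_asymptotic_general {Ω Y : Type*} {l : Filter Ω} {p : ℝ} (hp : 0 < p)
    {f : Ω → ℝ → Y → ℝ} {a ϑ : Ω → ℝ} {w : Y → ℝ} (hw : ∀ y, 0 ≤ w y)
    (ha : l.IsBoundedUnder (· ≤ ·) a) (hϑ : l.IsBoundedUnder (· ≥ ·) ϑ)
    (hgrowth : ∀ᶠ z in l, ∀ x, 0 < x → ∀ y, f z x y ≤ a z * (1 + x ^ (p - 1) + w y))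
    (hasymp : ∃ M, ∀ᶠ z in l, ∀ x, M ≤ x → ∀ y, f z x y ≤ ϑ z * x ^ (p - 1)) :
    ∃ c, 0 < c ∧ ∀ᶠ z in l, ∀ x, 0 ≤ x → ∀ y,
      f z x y * x ≤ ϑ z * x ^ p + c * w y + c := by
  obtain ⟨C, hC⟩ := ha.eventually_le
  obtain ⟨B, hB⟩ := hϑ.eventually_ge
  obtain ⟨M₀, hM₀⟩ := hasymp
  let A := max C 1
  let M := max M₀ 1
  let c := A * (M + M ^ p) + |B| * M ^ p
  have hc : 0 < c := by positivity
  refine ⟨c, hc, ?_⟩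
  filter_upwards [hC, hB, hgrowth, hM₀] with z haz hϑz hgz hMz x hx y
  have hwy : 0 ≤ w y := hw y
  rcases hx.eq_or_lt with rfl | hx
  · rw [Real.zero_rpow hp.ne', mul_zero, mul_zero, zero_add]
    positivity
  have hgA : f z x y ≤ A * (1 + x ^ (p - 1) + w y) :=
    (hgz x hx y).trans (by gcongr; exact haz.trans (le_max_left _ _))
  exact mul_le_mul_rpow_add_of_le_growth hp (by positivity) (abs_nonneg B) (by positivity)
    ((neg_abs_le B).trans hϑz) hwy hx hgA fun hMx => hMz x ((le_max_left _ _).trans hMx) y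

/-- **One-sided growth estimate from the asymptotic condition.**
Let `(Ω, μ)` be a measure space, `p > 1`, and `f : Ω × ℝ × ℝ^N → ℝ`. Suppose
`a, ϑ ∈ L^∞(Ω)` with `a ≥ 0` a.e. are such that
(i) `|f(z,x,y)| ≤ a(z)(1 + x^(p-1) + ‖y‖^(p-1))` for a.e. `z`, all `x ≥ 0`, all `y`; and
(ii) for every `ε > 0` there is `M₁ > 0` with `f(z,x,y) ≤ (ϑ(z)+ε) x^(p-1)` for a.e. `z`,
all `x ≥ M₁` and all `y`.
Then for every `ε > 0` there is `c₆ > 0` such that for a.e. `z`, all `x ≥ 0` and all `y`,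
`f(z,x,y)·x ≤ (ϑ(z)+ε) x^p + c₆ ‖y‖^(p-1) + c₆`. -/
theorem growth_estimate_from_asymptotic
    {Ω : Type*} [MeasurableSpace Ω] (μ : Measure Ω)
    {N : ℕ} (hN : 1 ≤ N) {p : ℝ} (hp : 1 < p)
    (f : Ω → ℝ → EuclideanSpace ℝ (Fin N) → ℝ)
    (a ϑ : Ω → ℝ)
    (ha_meas : Measurable a) (hϑ_meas : Measurable ϑ)
    (ha_bdd : ∃ C : ℝ, ∀ᵐ z ∂μ, |a z| ≤ C)
    (hϑ_bdd : ∃ C : ℝ, ∀ᵐ z ∂μ, |ϑ z| ≤ C)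
    (ha_nonneg : ∀ᵐ z ∂μ, 0 ≤ a z)
    (hgrowth : ∀ᵐ z ∂μ, ∀ x : ℝ, 0 ≤ x → ∀ y : EuclideanSpace ℝ (Fin N),
      |f z x y| ≤ a z * (1 + x ^ (p - 1) + ‖y‖ ^ (p - 1)))
    (hasymp : ∀ ε : ℝ, 0 < ε → ∃ M₁ : ℝ, 0 < M₁ ∧ ∀ᵐ z ∂μ,
      ∀ x : ℝ, M₁ ≤ x → ∀ y : EuclideanSpace ℝ (Fin N),
        f z x y ≤ (ϑ z + ε) * x ^ (p - 1)) :
    ∀ ε : ℝ, 0 < ε → ∃ c₆ : ℝ, 0 < c₆ ∧ ∀ᵐ z ∂μ,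
      ∀ x : ℝ, 0 ≤ x → ∀ y : EuclideanSpace ℝ (Fin N),
        f z x y * x ≤ (ϑ z + ε) * x ^ p + c₆ * ‖y‖ ^ (p - 1) + c₆ := by
  intro ε hε
  have hϑε : (ae μ).IsBoundedUnder (· ≥ ·) fun z => ϑ z + ε :=
    hϑ_bdd.elim fun T hT =>
      ⟨-T, hT.mono fun z hz => le_add_of_le_of_nonneg (neg_le_of_abs_le hz) hε.le⟩
  exact growth_estimate_from_asymptotic_general (zero_lt_one.trans hp)
    (fun y => Real.rpow_nonneg (norm_nonneg y) _)
    (ha_bdd.imp fun _ hC => hC.mono fun _ => le_of_abs_le) hϑε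
    (hgrowth.mono fun z hz x hx y => le_of_abs_le (hz x hx.le y))
    ((hasymp ε hε).imp fun _ hM => hM.2)
end

section
/- Let (Ω, μ) be a measure space, p > 1, N ≥ 1, M > 0, and let f : Ω × ℝ × ℝ^N → ℝ. Assume there exist essentially bounded measurable functions a, η : Ω → ℝ with a ≥ 0 and η ≥ 0 μ-a.e. such that: (i) for μ-a.e. z ∈ Ω, all x ≥ 0 and all y ∈ ℝ^N, |f(z, x, y)| ≤ a(z)(1 + x^{p−1} + ‖y‖^{p−1}); and (ii) for every ε > 0 there exists δ = δ(ε) > 0 such that for μ-a.e. z ∈ Ω, all 0 ≤ x ≤ δ and all y with ‖y‖ ≤ M, f(z, x, y) ≥ (η(z) − ε)·x^{p−1}. Then there exists a constant ξ̂_M > 0 such that for μ-a.e. z ∈ Ω, all x ∈ [0, M] and all y ∈ ℝ^N with ‖y‖ ≤ M, f(z, x, y) + ξ̂_M·x^{p−1} ≥ 0. -/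
open MeasureTheory

/-!
Write `q = p - 1`. For small `x`, say `x ≤ δ`, the asymptotic condition with `ε` fixed bounds `f`
below by a multiple of `-x ^ q`. For `δ ≤ x ≤ M` the growth condition bounds `f` below by a
constant `-K`, and `K ≤ (K / δ ^ q) * x ^ q` there. Adding the two coefficients covers both ranges.
-/

theorem neg_mul_rpow_le_of_near_of_away {q δ c K x t : ℝ} (hq : 0 ≤ q) (hδ : 0 < δ)
    (hc : 0 ≤ c) (hK : 0 ≤ K) (hx : 0 ≤ x)
    (near : x ≤ δ → -(c * x ^ q) ≤ t) (away : δ ≤ x → -K ≤ t) :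
    -((c + K / δ ^ q) * x ^ q) ≤ t := by
  have near_nonneg : 0 ≤ c * x ^ q := by positivity
  have away_nonneg : 0 ≤ K / δ ^ q * x ^ q := by positivity
  rw [add_mul]
  rcases le_total x δ with hxδ | hδx
  · linarith [near hxδ]
  · have hK_le : K ≤ K / δ ^ q * x ^ q :=
      calc K = K / δ ^ q * δ ^ q := (div_mul_cancel₀ K (Real.rpow_pos_of_pos hδ q).ne').symm
        _ ≤ K / δ ^ q * x ^ q := by gcongr
    linarith [away hδx]

section

variable {Ω E : Type*} {l : Filter Ω} [SeminormedAddCommGroup E] {q M : ℝ}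
  {f : Ω → ℝ → E → ℝ} {a η : Ω → ℝ}

theorem exists_eventually_neg_const_le_of_growth (hq : 0 ≤ q) (hM : 0 ≤ M)
    (ha : l.IsBoundedUnder (· ≤ ·) a)
    (hgrowth : ∀ᶠ z in l, ∀ x : ℝ, 0 ≤ x → ∀ y : E,
      -(a z * (1 + x ^ q + ‖y‖ ^ q)) ≤ f z x y) :
    ∃ K : ℝ, 0 ≤ K ∧ ∀ᶠ z in l, ∀ x : ℝ, 0 ≤ x → x ≤ M → ∀ y : E, ‖y‖ ≤ M →
      -K ≤ f z x y := by
  obtain ⟨C, hC⟩ := ha.eventually_le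
  refine ⟨|C| * (1 + M ^ q + M ^ q), by positivity, ?_⟩
  filter_upwards [hC, hgrowth] with z haC hgrowth x hx hxM y hyM
  refine le_trans (neg_le_neg ?_) (hgrowth x hx y)
  calc a z * (1 + x ^ q + ‖y‖ ^ q) ≤ |C| * (1 + x ^ q + ‖y‖ ^ q) := by
        gcongr
        exact haC.trans (le_abs_self C)
    _ ≤ |C| * (1 + M ^ q + M ^ q) := by gcongr

theorem exists_eventually_neg_mul_rpow_le_near_zero (hη : l.IsBoundedUnder (· ≥ ·) η)
    (hsmall : ∃ ε δ : ℝ, 0 < δ ∧ ∀ᶠ z in l, ∀ x : ℝ, 0 ≤ x → x ≤ δ → ∀ y : E, ‖y‖ ≤ M →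
      (η z - ε) * x ^ q ≤ f z x y) :
    ∃ c δ : ℝ, 0 < c ∧ 0 < δ ∧ ∀ᶠ z in l, ∀ x : ℝ, 0 ≤ x → x ≤ δ → ∀ y : E, ‖y‖ ≤ M →
      -(c * x ^ q) ≤ f z x y := by
  obtain ⟨b, hb⟩ := hη.eventually_ge
  obtain ⟨ε, δ, hδ, hsmall⟩ := hsmall
  refine ⟨max 1 (ε - b), δ, by positivity, hδ, ?_⟩
  filter_upwards [hb, hsmall] with z hbη hsmall x hx hxδ y hyM
  have coeff_le : -max 1 (ε - b) ≤ η z - ε := by linarith [le_max_right 1 (ε - b)]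
  calc -(max 1 (ε - b) * x ^ q) = -max 1 (ε - b) * x ^ q := (neg_mul _ _).symm
    _ ≤ (η z - ε) * x ^ q := by gcongr
    _ ≤ f z x y := hsmall x hx hxδ y hyM

theorem lower_bound_from_liminf_condition_general (hq : 0 ≤ q) (hM : 0 ≤ M)
    (ha : l.IsBoundedUnder (· ≤ ·) a) (hη : l.IsBoundedUnder (· ≥ ·) η)
    (hgrowth : ∀ᶠ z in l, ∀ x : ℝ, 0 ≤ x → ∀ y : E,
      -(a z * (1 + x ^ q + ‖y‖ ^ q)) ≤ f z x y)
    (hsmall : ∃ ε δ : ℝ, 0 < δ ∧ ∀ᶠ z in l, ∀ x : ℝ, 0 ≤ x → x ≤ δ → ∀ y : E, ‖y‖ ≤ M →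
      (η z - ε) * x ^ q ≤ f z x y) :
    ∃ ξ : ℝ, 0 < ξ ∧ ∀ᶠ z in l, ∀ x : ℝ, 0 ≤ x → x ≤ M → ∀ y : E, ‖y‖ ≤ M →
      0 ≤ f z x y + ξ * x ^ q := by
  obtain ⟨K, hK, away⟩ := exists_eventually_neg_const_le_of_growth hq hM ha hgrowth
  obtain ⟨c, δ, hc, hδ, near⟩ := exists_eventually_neg_mul_rpow_le_near_zero hη hsmall
  refine ⟨c + K / δ ^ q, by positivity, ?_⟩
  filter_upwards [near, away] with z near away x hx hxM y hyM
  rw [← neg_le_iff_add_nonneg]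
  exact neg_mul_rpow_le_of_near_of_away hq hδ hc.le hK hx
    (fun hxδ ↦ near x hx hxδ y hyM) (fun _ ↦ away x hx hxM y hyM)

end

/-- **Lower bound near zero from the liminf condition.**
Let `(Ω, μ)` be a measure space, `p > 1`, `M > 0`, and `f : Ω × ℝ × ℝ^N → ℝ`. Suppose
`a, η ∈ L^∞(Ω)` with `a ≥ 0` and `η ≥ 0` a.e. are such that
(i) `|f(z,x,y)| ≤ a(z)(1 + x^(p-1) + ‖y‖^(p-1))` for a.e. `z`, all `x ≥ 0`, all `y`; and
(ii) for every `ε > 0` there is `δ > 0` with `f(z,x,y) ≥ (η(z)-ε) x^(p-1)` for a.e. `z`,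
all `0 ≤ x ≤ δ` and all `‖y‖ ≤ M`.
Then there is `ξ̂_M > 0` such that for a.e. `z`, all `x ∈ [0, M]` and all `‖y‖ ≤ M`,
`f(z,x,y) + ξ̂_M x^(p-1) ≥ 0`. -/
theorem lower_bound_from_liminf_condition
    {Ω : Type*} [MeasurableSpace Ω] (μ : Measure Ω)
    {N : ℕ} (hN : 1 ≤ N) {p : ℝ} (hp : 1 < p) {M : ℝ} (hM : 0 < M)
    (f : Ω → ℝ → EuclideanSpace ℝ (Fin N) → ℝ)
    (a η : Ω → ℝ)
    (ha_meas : Measurable a) (hη_meas : Measurable η)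
    (ha_bdd : ∃ C : ℝ, ∀ᵐ z ∂μ, |a z| ≤ C)
    (hη_bdd : ∃ C : ℝ, ∀ᵐ z ∂μ, |η z| ≤ C)
    (ha_nonneg : ∀ᵐ z ∂μ, 0 ≤ a z)
    (hη_nonneg : ∀ᵐ z ∂μ, 0 ≤ η z)
    (hgrowth : ∀ᵐ z ∂μ, ∀ x : ℝ, 0 ≤ x → ∀ y : EuclideanSpace ℝ (Fin N),
      |f z x y| ≤ a z * (1 + x ^ (p - 1) + ‖y‖ ^ (p - 1)))
    (hsmall : ∀ ε : ℝ, 0 < ε → ∃ δ : ℝ, 0 < δ ∧ ∀ᵐ z ∂μ,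
      ∀ x : ℝ, 0 ≤ x → x ≤ δ → ∀ y : EuclideanSpace ℝ (Fin N), ‖y‖ ≤ M →
        (η z - ε) * x ^ (p - 1) ≤ f z x y) :
    ∃ ξ : ℝ, 0 < ξ ∧ ∀ᵐ z ∂μ,
      ∀ x : ℝ, 0 ≤ x → x ≤ M → ∀ y : EuclideanSpace ℝ (Fin N), ‖y‖ ≤ M →
        0 ≤ f z x y + ξ * x ^ (p - 1) := by
  exact lower_bound_from_liminf_condition_general (sub_nonneg.2 hp.le) hM.le
    (ha_bdd.imp fun _ hC ↦ hC.mono fun _ ↦ le_of_abs_le) ⟨0, hη_nonneg⟩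
    (hgrowth.mono fun _ h x hx y ↦ neg_le_of_abs_le (h x hx y)) ⟨1, hsmall 1 one_pos⟩
end
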